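/- Let Ω ⊂ ℝ^N be a bounded open set with C² boundary. For ε ∈ (0,1) and β ∈ (0,1), define ψ_β : ℝ^N → ℝ by ψ_β(x) = (ε + d(x))^β if x ∈ Ω̄ and ψ_β(x) = 0 otherwise. Then there exist δ̄ ∈ (0, δ₀), β₀ ∈ (0, min{1, 2σ}) and a constant c* > 0, depending only on Ω, N and σ, such that for every β ∈ (0, β₀], every ε ∈ (0, δ̄) and every x in the closure of Ω_δ̄ = {x ∈ Ω : d(x) < δ̄}, one has −I_ε[ψ_β](x) ≥ c* (ε + d(x))^{β − 2σ}. -/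

import Mathlib

open MeasureTheory Metric Set Filter Classical

noncomputable section

/-- The zero-order kernel `K_ε(z) = 1/(ε^{N+2σ} + |z|^{N+2σ})`. -/
def Kker (N : ℕ) (σ ε : ℝ) (z : EuclideanSpace ℝ (Fin N)) : ℝ :=
  1 / (ε ^ ((N : ℝ) + 2 * σ) + ‖z‖ ^ ((N : ℝ) + 2 * σ))

/-- The zero-order nonlocal operator `I_ε[u](x) = ∫ (u(x+z) - u(x)) K_ε(z) dz`. -/
def Iop (N : ℕ) (σ ε : ℝ) (u : EuclideanSpace ℝ (Fin N) → ℝ)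
    (x : EuclideanSpace ℝ (Fin N)) : ℝ :=
  ∫ z, (u (x + z) - u x) * Kker N σ ε z

open Classical in
/-- The signed distance to the boundary of `Ω`. -/
def sdist (N : ℕ) (Ω : Set (EuclideanSpace ℝ (Fin N))) (x : EuclideanSpace ℝ (Fin N)) : ℝ :=
  if x ∈ closure Ω then Metric.infDist x (frontier Ω) else -Metric.infDist x (frontier Ω)

/-- `Ω` has `C²` boundary with parameter `δ₀`: the boundary is nonempty and the signed
distance is `C²` on the strip `{|d| < δ₀}`. -/
def HasC2Boundary (N : ℕ) (Ω : Set (EuclideanSpace ℝ (Fin N))) (δ₀ : ℝ) : Prop :=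
  (frontier Ω).Nonempty ∧ 0 < δ₀ ∧
    ContDiffOn ℝ 2 (sdist N Ω) {x | |sdist N Ω x| < δ₀}

/-- A modulus of continuity: nonnegative, nondecreasing on `[0,∞)`, vanishing and
continuous at `0`. -/
def IsModulus (m : ℝ → ℝ) : Prop :=
  (∀ t, 0 ≤ m t) ∧ MonotoneOn m (Set.Ici (0 : ℝ)) ∧ m 0 = 0 ∧ ContinuousAt m 0

/-- A (pointwise) solution of the Dirichlet problem `-I_ε[u] = f` in `Ω`, `u = 0` in `Ωᶜ`:
a bounded measurable function, continuous in `Ω`, vanishing outside `Ω`, solving the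
equation pointwise in `Ω`. -/
def IsSolution (N : ℕ) (σ : ℝ) (Ω : Set (EuclideanSpace ℝ (Fin N)))
    (f : EuclideanSpace ℝ (Fin N) → ℝ) (ε : ℝ)
    (u : EuclideanSpace ℝ (Fin N) → ℝ) : Prop :=
  Measurable u ∧ (∃ C, ∀ x, |u x| ≤ C) ∧ ContinuousOn u Ω ∧
    (∀ x, x ∉ Ω → u x = 0) ∧ ∀ x ∈ Ω, -Iop N σ ε u x = f x

abbrev EE (N : ℕ) := EuclideanSpace ℝ (Fin N)

lemma pre_frontier {N : ℕ} {A B : Set (EE N)} (h : IsPreconnected B)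
    (h1 : (B ∩ A).Nonempty) (h2 : (B ∩ Aᶜ).Nonempty) : (B ∩ frontier A).Nonempty := by
  by_contra hne
  rw [not_nonempty_iff_eq_empty] at hne
  have hno : ∀ x ∈ B, x ∉ frontier A := fun x hx hxf => by
    have : x ∈ B ∩ frontier A := ⟨hx, hxf⟩
    rw [hne] at this; exact this
  obtain ⟨a, haB, haA⟩ := h1
  obtain ⟨b, hbB, hbA⟩ := h2
  have key : ∀ x ∈ B, (x ∈ A → x ∈ interior A) ∧ (x ∉ A → x ∈ (closure A)ᶜ) := by
    intro x hx
    have := hno x hx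
    refine ⟨fun hA => ?_, fun hA hc => ?_⟩
    · by_contra hi; exact this ⟨subset_closure hA, hi⟩
    · exact this ⟨hc, fun hi => hA (interior_subset hi)⟩
  obtain ⟨c, -, hc1, hc2⟩ := h (interior A) (closure A)ᶜ isOpen_interior isClosed_closure.isOpen_compl
    (fun x hx => by
      by_cases hA : x ∈ A
      · exact Or.inl ((key x hx).1 hA)
      · exact Or.inr ((key x hx).2 hA))
    ⟨a, haB, (key a haB).1 haA⟩ ⟨b, hbB, (key b hbB).2 hbA⟩
  exact hc2 (subset_closure (interior_subset hc1))

lemma same_side {N : ℕ} {Ω : Set (EE N)} {u v : EE N}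
    (h : dist u v < infDist u (frontier Ω)) : u ∈ closure Ω ↔ v ∈ closure Ω := by
  by_contra hne
  have hpre : IsPreconnected (ball u (infDist u (frontier Ω))) :=
    (convex_ball u _).isPreconnected
  have hu : u ∈ ball u (infDist u (frontier Ω)) :=
    mem_ball_self (lt_of_le_of_lt dist_nonneg h)
  have hv : v ∈ ball u (infDist u (frontier Ω)) := by
    rw [mem_ball, dist_comm]; exact h
  have key : (ball u (infDist u (frontier Ω)) ∩ frontier (closure Ω)).Nonempty := by
    by_cases hc : u ∈ closure Ω
    · have : v ∉ closure Ω := fun h' => hne ⟨fun _ => h', fun _ => hc⟩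
      exact pre_frontier hpre ⟨u, hu, hc⟩ ⟨v, hv, this⟩
    · have : v ∈ closure Ω := by
        by_contra h'
        exact hne ⟨fun h => absurd h hc, fun h => absurd h h'⟩
      exact pre_frontier hpre ⟨v, hv, this⟩ ⟨u, hu, hc⟩
  obtain ⟨w, hw, hwf⟩ := key
  have := infDist_le_dist_of_mem (x := u) (frontier_closure_subset hwf)
  rw [mem_ball, dist_comm] at hw
  linarith

lemma sdist_closure {N : ℕ} {Ω : Set (EE N)} {x : EE N} (h : x ∈ closure Ω) :
    sdist N Ω x = infDist x (frontier Ω) := by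
  simp [sdist, h]

lemma abs_sdist {N : ℕ} {Ω : Set (EE N)} {x : EE N} :
    |sdist N Ω x| = infDist x (frontier Ω) := by
  unfold sdist; split_ifs
  · exact abs_of_nonneg infDist_nonneg
  · rw [abs_neg]; exact abs_of_nonneg infDist_nonneg

lemma ext_local {N : ℕ} {Ω : Set (EE N)} (hΩo : IsOpen Ω) {δ₀ : ℝ}
    (hC2 : HasC2Boundary N Ω δ₀) (y₀ : EE N) (hy₀ : y₀ ∈ frontier Ω) :
    ∃ r > 0, ∀ y ∈ frontier Ω ∩ ball y₀ r, ∀ t, 0 < t → t ≤ r →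
      ∃ w, dist w y ≤ t ∧ sdist N Ω w ≤ -t/2 := by
  obtain ⟨hne, hδ, hC⟩ := hC2
  have hset : {x | |sdist N Ω x| < δ₀} = {x | infDist x (frontier Ω) < δ₀} := by
    ext x; simp [abs_sdist]
  have hopen : IsOpen {x : EE N | |sdist N Ω x| < δ₀} := by
    rw [hset]; exact isOpen_lt (continuous_infDist_pt _) continuous_const
  have hmem : y₀ ∈ {x : EE N | |sdist N Ω x| < δ₀} := by
    rw [hset]; simp [infDist_zero_of_mem hy₀, hδ]
  have hs := (hC.contDiffAt (hopen.mem_nhds hmem)).hasStrictFDerivAt (by norm_num)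
  have hlo := hs.isLittleO.def (show (0:ℝ) < 1/4 by norm_num)
  set L := fderiv ℝ (sdist N Ω) y₀
  rw [nhds_prod_eq, eventually_prod_self_iff'] at hlo
  obtain ⟨V, hV, hVL⟩ := hlo
  obtain ⟨r, hr, hrV⟩ := Metric.mem_nhds_iff.1 hV
  -- find a, b
  obtain ⟨a, haΩ, hay⟩ := Metric.mem_closure_iff.1 (frontier_subset_closure hy₀) (r/2) (by positivity)
  obtain ⟨b, hb, hab⟩ := isClosed_frontier.exists_infDist_eq_dist hne a
  have hab2 : dist a b ≤ dist a y₀ := by rw [← hab]; exact infDist_le_dist_of_mem hy₀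
  have hda : sdist N Ω a = dist a b := by rw [sdist_closure (subset_closure haΩ), hab]
  have hdf : ∀ y ∈ frontier Ω, sdist N Ω y = 0 := fun y hy => by
    rw [sdist_closure (frontier_subset_closure hy), infDist_zero_of_mem hy]
  rw [dist_comm] at hay
  have haV : a ∈ V := hrV (by rw [mem_ball]; linarith)
  have hbV : b ∈ V := hrV (by
    rw [mem_ball]; have := dist_triangle b a y₀; rw [dist_comm b a] at this; linarith)
  have hpos : 0 < dist a b := by
    rw [dist_pos]; rintro rfl
    rw [hΩo.frontier_eq] at hb; exact hb.2 haΩ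
  have h1 := hVL a haV b hbV
  simp only [hda, hdf b hb, sub_zero, Real.norm_eq_abs, dist_eq_norm] at h1
  rw [dist_eq_norm] at hpos
  have hL : 3/4 * ‖a - b‖ ≤ L (a - b) := by
    have := abs_le.1 h1; linarith [this.2]
  set n := (‖a-b‖)⁻¹ • (a - b) with hn
  have hnn : ‖n‖ = 1 := by rw [hn, norm_smul, norm_inv, norm_norm, inv_mul_cancel₀ hpos.ne']
  have hLn : 3/4 ≤ L n := by
    rw [hn, map_smul, smul_eq_mul, inv_mul_eq_div, le_div_iff₀ hpos]; exact hL
  refine ⟨r/3, by positivity, fun y hy t ht htr => ⟨y - t • n, ?_, ?_⟩⟩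
  · simp [norm_smul, hnn, abs_of_pos ht]
  · have hyb := hy.2
    rw [mem_ball] at hyb
    have hyV : y ∈ V := hrV (by rw [mem_ball]; linarith)
    have hdw : dist (y - t • n) y = t := by simp [norm_smul, hnn, abs_of_pos ht]
    have hwV : y - t • n ∈ V := hrV (by
      rw [mem_ball]; have := dist_triangle (y - t • n) y y₀; linarith)
    have h2 := hVL _ hwV _ hyV
    simp only [hdf y hy.1, sub_zero, Real.norm_eq_abs] at h2
    rw [← dist_eq_norm, hdw] at h2
    have h3 : L (y - t • n - y) = - (t * L n) := by
      rw [sub_sub_cancel_left, map_neg, map_smul, smul_eq_mul]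
    rw [h3] at h2
    have := (abs_le.1 h2).2
    nlinarith

lemma ext_global {N : ℕ} {Ω : Set (EE N)} (hΩo : IsOpen Ω) (hΩb : Bornology.IsBounded Ω) {δ₀ : ℝ}
    (hC2 : HasC2Boundary N Ω δ₀) :
    ∃ r > 0, ∀ y ∈ frontier Ω, ∀ t, 0 < t → t ≤ r →
      ∃ w, dist w y ≤ t ∧ sdist N Ω w ≤ -t/2 := by
  have hcomp : IsCompact (frontier Ω) :=
    Metric.isCompact_of_isClosed_isBounded isClosed_frontier
      (hΩb.closure.subset frontier_subset_closure)
  refine hcomp.induction_on (p := fun s => ∃ r > 0, ∀ y ∈ s, ∀ t, 0 < t → t ≤ r →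
      ∃ w, dist w y ≤ t ∧ sdist N Ω w ≤ -t/2) ⟨1, one_pos, by simp⟩ ?_ ?_ ?_
  · rintro s t hst ⟨r, hr, h⟩
    exact ⟨r, hr, fun y hy => h y (hst hy)⟩
  · rintro s t ⟨r, hr, h⟩ ⟨r', hr', h'⟩
    refine ⟨min r r', lt_min hr hr', fun y hy u hu hur => ?_⟩
    rcases hy with hy | hy
    · exact h y hy u hu (hur.trans (min_le_left _ _))
    · exact h' y hy u hu (hur.trans (min_le_right _ _))
  · intro x hx
    obtain ⟨r, hr, h⟩ := ext_local hΩo hC2 x hx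
    exact ⟨_, inter_mem_nhdsWithin _ (ball_mem_nhds x hr), r, hr, h⟩

/-- exterior balls near x -/
lemma ext_ball {N : ℕ} {Ω : Set (EE N)} (hΩo : IsOpen Ω) (hΩb : Bornology.IsBounded Ω) {δ₀ : ℝ}
    (hC2 : HasC2Boundary N Ω δ₀) :
    ∃ r > 0, ∀ x ∈ closure Ω, ∀ ρ, 0 < ρ → ρ ≤ r → sdist N Ω x ≤ ρ →
      ∃ w, dist w x ≤ 2 * ρ ∧ ∀ v, dist w v < ρ/2 → v ∉ closure Ω := by
  obtain ⟨r, hr, h⟩ := ext_global hΩo hΩb hC2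
  refine ⟨r, hr, fun x hx ρ hρ hρr hd => ?_⟩
  rw [sdist_closure hx] at hd
  obtain ⟨y, hy, hxy⟩ := isClosed_frontier.exists_infDist_eq_dist hC2.1 x
  obtain ⟨w, hw, hdw⟩ := h y hy ρ hρ hρr
  have hwn : w ∉ closure Ω := fun hc => by
    rw [sdist_closure hc] at hdw
    have := infDist_nonneg (x := w) (s := frontier Ω)
    linarith
  refine ⟨w, ?_, fun v hv hvc => ?_⟩
  · have := dist_triangle w y x
    rw [dist_comm y x] at this; linarith
  · refine hwn ((same_side (v := v) ?_).2 hvc)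
    have : sdist N Ω w = - infDist w (frontier Ω) := by simp [sdist, hwn]
    linarith

def Wf (p σ t : ℝ) : ℝ := if t < 1/2 then t ^ (2 - p) + 2 ^ p else t ^ (σ - p)

lemma Wf_nonneg (p σ t : ℝ) (ht : 0 ≤ t) : 0 ≤ Wf p σ t := by
  unfold Wf; split_ifs <;> positivity

lemma Wf_integrable {N : ℕ} (hN : 1 ≤ N) {σ : ℝ} (hσ : σ ∈ Set.Ioo (0 : ℝ) 1) :
    Integrable (fun s : EE N => Wf ((N:ℝ) + 2 * σ) σ ‖s‖) := by
  obtain ⟨h0, h1⟩ := hσ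
  have : Nonempty (Fin N) := ⟨⟨0, hN⟩⟩
  have : Nontrivial (EE N) := inferInstance
  rw [integrable_fun_norm_addHaar volume (f := Wf ((N:ℝ) + 2 * σ) σ)]
  have hdim : Module.finrank ℝ (EE N) = N := by simp
  rw [hdim]
  have hU : Ioi (0:ℝ) = Ioo 0 (1/2) ∪ Ici (1/2) := (Ioo_union_Ici_eq_Ioi (by norm_num)).symm
  rw [hU]
  have hcast : ((N - 1 : ℕ) : ℝ) = (N:ℝ) - 1 := by push_cast [Nat.cast_sub hN]; ring
  refine IntegrableOn.union ?_ ?_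
  · have h : IntegrableOn (fun y : ℝ => y ^ (1 - 2 * σ) + 2 ^ ((N:ℝ) + 2 * σ) * y ^ (N-1)) (Ioo 0 (1/2)) := by
      refine IntegrableOn.add ?_ ?_
      · rw [intervalIntegral.integrableOn_Ioo_rpow_iff (by norm_num)]; linarith
      · exact (Continuous.integrableOn_Icc (by fun_prop)).mono_set Ioo_subset_Icc_self
    refine h.congr_fun ?_ measurableSet_Ioo
    intro y hy
    simp only [Wf, hy.2, if_true, smul_eq_mul]
    rw [mul_add, ← Real.rpow_natCast y (N-1), ← Real.rpow_add hy.1, hcast]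
    ring_nf
  · rw [integrableOn_Ici_iff_integrableOn_Ioi]
    have h : IntegrableOn (fun y : ℝ => y ^ (-1 - σ)) (Ioi (1/2)) :=
      integrableOn_Ioi_rpow_of_lt (by linarith) (by norm_num)
    refine h.congr_fun ?_ measurableSet_Ioi
    intro y (hy : 1/2 < y)
    have hy0 : 0 < y := by linarith
    simp only [Wf, not_lt.2 hy.le, if_false, smul_eq_mul]
    rw [← Real.rpow_natCast y (N-1), ← Real.rpow_add hy0, hcast]
    ring_nf

lemma Kker_nonneg {N : ℕ} {σ a : ℝ} (ha : 0 < a) (s : EE N) : 0 ≤ Kker N σ a s := by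
  unfold Kker; positivity

lemma Kker_le {N : ℕ} {σ a : ℝ} (ha : 0 < a) (s : EE N) (hs : 0 < ‖s‖) :
    Kker N σ a s ≤ ‖s‖ ^ (-((N:ℝ) + 2 * σ)) := by
  unfold Kker
  rw [Real.rpow_neg (norm_nonneg _), ← one_div]
  apply one_div_le_one_div_of_le (by positivity)
  have : 0 ≤ a ^ ((N:ℝ) + 2 * σ) := by positivity
  linarith

lemma Kker_le' {N : ℕ} {σ a : ℝ} (hσ : 0 < σ) (ha : 1/2 ≤ a) (s : EE N) :
    Kker N σ a s ≤ 2 ^ ((N:ℝ) + 2 * σ) := by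
  unfold Kker
  have h1 : (1/2:ℝ) ^ ((N:ℝ) + 2 * σ) ≤ a ^ ((N:ℝ) + 2 * σ) :=
    Real.rpow_le_rpow (by norm_num) ha (by positivity)
  have h2 : (1/2:ℝ) ^ ((N:ℝ) + 2 * σ) = 1 / 2 ^ ((N:ℝ) + 2 * σ) := by
    rw [Real.div_rpow (by norm_num) (by norm_num), Real.one_rpow]
  have h3 : 0 ≤ ‖s‖ ^ ((N:ℝ) + 2 * σ) := by positivity
  rw [div_le_iff₀ (by positivity)]
  have h4 : (2:ℝ) ^ ((N:ℝ) + 2 * σ) * (1/2:ℝ) ^ ((N:ℝ) + 2 * σ) = 1 := by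
    rw [h2]; field_simp
  have h5 : 0 < (2:ℝ) ^ ((N:ℝ) + 2 * σ) := by positivity
  nlinarith

lemma Kker_ge {N : ℕ} {σ a : ℝ} (hσ : 0 < σ) (ha : 0 < a) (ha1 : a ≤ 1) (s : EE N) (hs : ‖s‖ ≤ 3) :
    1 / (1 + 3 ^ ((N:ℝ) + 2 * σ)) ≤ Kker N σ a s := by
  unfold Kker
  apply one_div_le_one_div_of_le (by positivity)
  have h1 : a ^ ((N:ℝ) + 2 * σ) ≤ 1 := Real.rpow_le_one ha.le ha1 (by positivity)
  have h2 : ‖s‖ ^ ((N:ℝ) + 2 * σ) ≤ 3 ^ ((N:ℝ) + 2 * σ) :=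
    Real.rpow_le_rpow (norm_nonneg _) hs (by positivity)
  linarith

lemma Kker_scale {N : ℕ} {σ ε ρ : ℝ} (hε : 0 < ε) (hρ : 0 < ρ) (s : EE N) :
    Kker N σ ε (ρ • s) = ρ ^ (-((N:ℝ) + 2 * σ)) * Kker N σ (ε/ρ) s := by
  unfold Kker
  rw [norm_smul, Real.norm_eq_abs, abs_of_pos hρ, Real.mul_rpow hρ.le (norm_nonneg _),
    Real.div_rpow hε.le hρ.le, Real.rpow_neg hρ.le]
  have : 0 < ρ ^ ((N:ℝ) + 2 * σ) := by positivity
  have : 0 < ε ^ ((N:ℝ) + 2 * σ) := by positivity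
  field_simp

lemma Kker_meas {N : ℕ} {σ a : ℝ} : Measurable (Kker N σ a) := by
  unfold Kker; fun_prop

lemma Kker_integrable {N : ℕ} {σ a : ℝ} (hσ : 0 < σ) (ha : 0 < a) : Integrable (Kker N σ a) := by
  have h := integrable_one_add_norm (E := EE N) (μ := volume) (r := (N:ℝ) + 2 * σ)
    (by simp; linarith)
  set p := (N:ℝ) + 2 * σ with hp
  have hp0 : 0 < p := by positivity
  set m := min (a ^ p) 1 with hm
  have hm0 : 0 < m := lt_min (by positivity) one_pos
  refine (h.const_mul (2 ^ p / m)).mono' Kker_meas.aestronglyMeasurable (ae_of_all _ fun s => ?_)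
  rw [Real.norm_eq_abs, abs_of_nonneg (Kker_nonneg ha s)]
  unfold Kker
  rw [← hp]
  have hs := norm_nonneg s
  have h1 : (1 + ‖s‖) ^ p ≤ 2 ^ p * (1 + ‖s‖ ^ p) := by
    rcases le_total ‖s‖ 1 with hle | hle
    · calc (1 + ‖s‖) ^ p ≤ 2 ^ p := Real.rpow_le_rpow (by positivity) (by linarith) hp0.le
        _ ≤ _ := le_mul_of_one_le_right (by positivity) (by linarith [Real.rpow_nonneg hs p])
    · calc (1 + ‖s‖) ^ p ≤ (2 * ‖s‖) ^ p := Real.rpow_le_rpow (by positivity) (by linarith) hp0.le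
        _ = 2 ^ p * ‖s‖ ^ p := Real.mul_rpow (by norm_num) hs
        _ ≤ _ := by gcongr; linarith
  have h2 : m * (1 + ‖s‖ ^ p) ≤ a ^ p + ‖s‖ ^ p := by
    have := min_le_left (a ^ p) 1
    have h3 := min_le_right (a ^ p) 1
    have h4 := Real.rpow_nonneg hs p
    nlinarith
  rw [Real.rpow_neg (by positivity), ← div_eq_mul_inv, div_div]
  rw [div_le_div_iff₀ (by positivity) (by positivity)]
  have h5 : 0 < (2:ℝ) ^ p := by positivity
  calc 1 * (m * (1 + ‖s‖) ^ p) ≤ m * (2 ^ p * (1 + ‖s‖ ^ p)) := by rw [one_mul]; gcongr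
    _ = 2 ^ p * (m * (1 + ‖s‖ ^ p)) := by ring
    _ ≤ _ := by gcongr

lemma pow_bound {β σ t : ℝ} (hβ : 0 < β) (hβσ : β ≤ σ) (hσ1 : σ < 1) (ht : 0 ≤ t) :
    (1 + t) ^ β - 1 ≤ β / σ * t ^ σ := by
  have hσ : 0 < σ := by linarith
  have h1 : (1 + t) ^ σ ≤ 1 + t ^ σ := by
    simpa using Real.rpow_add_le_add_rpow (p := σ) (zero_le_one) ht hσ.le hσ1.le
  have h2 : (1 + t ^ σ) ^ (β / σ) ≤ 1 + β / σ * t ^ σ :=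
    rpow_one_add_le_one_add_mul_self (by linarith [Real.rpow_nonneg ht σ]) (by positivity)
      ((div_le_one hσ).2 hβσ)
  have h3 : (1 + t) ^ β = ((1 + t) ^ σ) ^ (β / σ) := by
    rw [← Real.rpow_mul (by positivity)]; congr 1; field_simp
  have h4 : ((1 + t) ^ σ) ^ (β / σ) ≤ (1 + t ^ σ) ^ (β / σ) :=
    Real.rpow_le_rpow (by positivity) h1 (by positivity)
  linarith

def Lf (N : ℕ) (σ a : ℝ) (e s : EE N) : ℝ := if ‖s‖ < 1/2 then inner ℝ e s * Kker N σ a s else 0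

lemma Lf_integrable {N : ℕ} {σ a : ℝ} (hσ : 0 < σ) (ha : 0 < a) (e : EE N) :
    Integrable (Lf N σ a e) := by
  refine ((Kker_integrable (N := N) hσ ha).const_mul ‖e‖).mono' ?_ (ae_of_all _ fun s => ?_)
  · unfold Lf
    refine (Measurable.ite ?_ ?_ measurable_const).aestronglyMeasurable
    · exact measurableSet_lt measurable_norm measurable_const
    · exact (by fun_prop : Measurable fun s : EE N => inner ℝ e s).mul Kker_meas
  · have hk := Kker_nonneg (N := N) (σ := σ) ha s
    unfold Lf; split_ifs with h
    · rw [norm_mul, Real.norm_eq_abs (Kker _ _ _ _), abs_of_nonneg hk]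
      gcongr
      have := norm_inner_le_norm (𝕜 := ℝ) e s
      nlinarith [norm_nonneg e]
    · simp; positivity

lemma Lf_integral {N : ℕ} {σ a : ℝ} (e : EE N) : ∫ s, Lf N σ a e s = 0 := by
  have h1 : ∫ s, Lf N σ a e (-s) = ∫ s, Lf N σ a e s := integral_neg_eq_self (Lf N σ a e) volume
  have h2 : ∀ s, Lf N σ a e (-s) = - Lf N σ a e s := by
    intro s; simp only [Lf, Kker, norm_neg, inner_neg_right]; split_ifs <;> ring
  simp only [h2, integral_neg] at h1
  linarith

def psi (N : ℕ) (Ω : Set (EE N)) (ε β : ℝ) (x : EE N) : ℝ :=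
  if x ∈ closure Ω then (ε + sdist N Ω x) ^ β else 0

set_option maxHeartbeats 1000000 in
lemma pointwise {N : ℕ} {σ : ℝ} (hσ : σ ∈ Set.Ioo (0 : ℝ) 1)
    {Ω : Set (EE N)} (hne : (frontier Ω).Nonempty) {x : EE N} (hx : x ∈ closure Ω)
    {ε β ρ : ℝ} (hε : 0 < ε) (hβ : 0 < β) (hβσ : β ≤ σ) (hρ : ρ = ε + sdist N Ω x) :
    ∃ e : EE N, ∀ s, (psi N Ω ε β (x + ρ • s) - psi N Ω ε β x) * Kker N σ (ε/ρ) s ≤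
      ρ ^ β * (β / σ * Wf ((N:ℝ) + 2 * σ) σ ‖s‖ + β * Lf N σ (ε/ρ) e s
        - if x + ρ • s ∈ closure Ω then 0 else Kker N σ (ε/ρ) s) := by
  obtain ⟨hσ0, hσ1⟩ := hσ
  set d := infDist x (frontier Ω) with hd
  have hd0 : 0 ≤ d := infDist_nonneg
  have hsd : sdist N Ω x = d := sdist_closure hx
  rw [hsd] at hρ
  have hρ0 : 0 < ρ := by linarith
  have ha : 0 < ε / ρ := by positivity
  have hψx : psi N Ω ε β x = ρ ^ β := by simp [psi, hx, hsd, hρ]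
  have hρβ : 0 < ρ ^ β := by positivity
  set p := (N:ℝ) + 2 * σ with hp
  set k := Kker N σ (ε/ρ) with hk
  have hk0 : ∀ s, 0 ≤ k s := fun s => Kker_nonneg ha s
  have hβ1 : β ≤ 1 := by linarith
  have hβσ0 : 0 < β / σ := by positivity
  -- value of psi inside
  have hin : ∀ s, x + ρ • s ∈ closure Ω → psi N Ω ε β (x + ρ • s) =
      ρ ^ β * ((ε + infDist (x + ρ • s) (frontier Ω)) / ρ) ^ β := by
    intro s hs
    have h0 : 0 ≤ infDist (x + ρ • s) (frontier Ω) := infDist_nonneg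
    rw [psi, if_pos hs, sdist_closure hs, Real.div_rpow (by positivity) hρ0.le]
    field_simp
  -- generic bound
  have hgen : ∀ s, x + ρ • s ∈ closure Ω → psi N Ω ε β (x + ρ • s) - psi N Ω ε β x ≤
      ρ ^ β * (β / σ * ‖s‖ ^ σ) := by
    intro s hs
    have h0 : 0 ≤ infDist (x + ρ • s) (frontier Ω) := infDist_nonneg
    rw [hin s hs, hψx]
    have h1 : infDist (x + ρ • s) (frontier Ω) ≤ d + ρ * ‖s‖ := by
      have := infDist_le_infDist_add_dist (s := frontier Ω) (x := x + ρ • s) (y := x)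
      simpa [norm_smul, abs_of_pos hρ0] using this
    have h2 : (ε + infDist (x + ρ • s) (frontier Ω)) / ρ ≤ 1 + ‖s‖ := by
      rw [div_le_iff₀ hρ0]; linarith
    have h3 := Real.rpow_le_rpow (by positivity) h2 hβ.le
    have h4 := pow_bound hβ hβσ hσ1 (norm_nonneg s)
    nlinarith
  -- outside
  have hout : ∀ s, x + ρ • s ∉ closure Ω → psi N Ω ε β (x + ρ • s) - psi N Ω ε β x = - ρ ^ β := by
    intro s hs; rw [hψx, psi, if_neg hs]; ring
  have hW : ∀ s : EE N, 0 ≤ Wf p σ ‖s‖ := fun s => Wf_nonneg _ _ _ (norm_nonneg s)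
  -- far bound
  have hfar : ∀ s : EE N, 1/2 ≤ ‖s‖ → ‖s‖ ^ σ * k s ≤ Wf p σ ‖s‖ := by
    intro s hs
    have hs0 : 0 < ‖s‖ := by linarith
    rw [Wf, if_neg (not_lt.2 hs), sub_eq_add_neg, Real.rpow_add hs0]
    gcongr
    exact Kker_le ha s hs0
  by_cases hcase : d < ρ / 2
  · -- case A
    refine ⟨0, fun s => ?_⟩
    have hL : Lf N σ (ε/ρ) 0 s = 0 := by simp [Lf]
    rw [hL]
    have ha2 : 1/2 ≤ ε / ρ := by rw [le_div_iff₀ hρ0]; linarith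
    by_cases hs : x + ρ • s ∈ closure Ω
    · rw [if_pos hs]
      have hb : ‖s‖ ^ σ * k s ≤ Wf p σ ‖s‖ := by
        by_cases hh : ‖s‖ < 1/2
        · rw [Wf, if_pos hh]
          have h1 : ‖s‖ ^ σ ≤ 1 := Real.rpow_le_one (norm_nonneg _) (by linarith) hσ0.le
          have h2 : k s ≤ 2 ^ p := Kker_le' hσ0 ha2 s
          have h3 : 0 ≤ ‖s‖ ^ (2 - p) := by positivity
          nlinarith [hk0 s]
        · exact hfar s (not_lt.1 hh)
      calc _ ≤ ρ ^ β * (β / σ * ‖s‖ ^ σ) * k s :=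
            mul_le_mul_of_nonneg_right (hgen s hs) (hk0 s)
        _ = ρ ^ β * (β / σ * (‖s‖ ^ σ * k s)) := by ring
        _ ≤ ρ ^ β * (β / σ * Wf p σ ‖s‖) := by gcongr
        _ = _ := by ring
    · rw [if_neg hs, hout s hs]
      have := mul_nonneg hβσ0.le (hW s)
      nlinarith
  · -- case B
    rw [not_lt] at hcase
    have hdpos : 0 < d := by linarith
    obtain ⟨y, hy, hxy⟩ := isClosed_frontier.exists_infDist_eq_dist hne x
    rw [← hd, dist_eq_norm] at hxy
    refine ⟨d⁻¹ • (x - y), fun s => ?_⟩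
    by_cases hh : ‖s‖ < 1/2
    · have hs : x + ρ • s ∈ closure Ω := by
        refine (same_side (u := x) ?_).1 hx
        rw [← hd, dist_self_add_right, norm_smul, Real.norm_eq_abs, abs_of_pos hρ0]
        nlinarith
      rw [if_pos hs, Lf, if_pos hh, Wf, if_pos hh, hin s hs, hψx]
      set i := inner ℝ (d⁻¹ • (x - y)) s with hi
      have h0 : 0 ≤ infDist (x + ρ • s) (frontier Ω) := infDist_nonneg
      have h1 : infDist (x + ρ • s) (frontier Ω) ≤ ‖(x - y) + ρ • s‖ := by
        have := infDist_le_dist_of_mem (x := x + ρ • s) hy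
        rw [dist_eq_norm] at this
        rwa [show x + ρ • s - y = (x - y) + ρ • s by abel] at this
      have h2 : ‖(x - y) + ρ • s‖ ^ 2 = d ^ 2 + 2 * (ρ * (d * i)) + ρ ^ 2 * ‖s‖ ^ 2 := by
        rw [norm_add_sq_real, ← hxy, hi, real_inner_smul_left, real_inner_smul_right, norm_smul,
          Real.norm_eq_abs, mul_pow, sq_abs]
        field_simp
      have h3 : ‖(x - y) + ρ • s‖ ≤ d + ρ * i + ρ * ‖s‖ ^ 2 := by
        have h4 : 2 * d * ‖(x - y) + ρ • s‖ ≤ d ^ 2 + ‖(x - y) + ρ • s‖ ^ 2 := by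
          nlinarith [sq_nonneg (d - ‖(x - y) + ρ • s‖)]
        rw [h2] at h4
        have h5 : ρ ^ 2 * ‖s‖ ^ 2 ≤ 2 * d * (ρ * ‖s‖ ^ 2) := by
          have : 0 ≤ ρ * ‖s‖ ^ 2 := by positivity
          nlinarith
        have h6 : 2 * d * ‖(x - y) + ρ • s‖ ≤ 2 * d * (d + ρ * i + ρ * ‖s‖ ^ 2) := by linarith
        exact le_of_mul_le_mul_left h6 (by positivity)
      set u := (ε + infDist (x + ρ • s) (frontier Ω)) / ρ with hu
      have hu0 : 0 ≤ u := by positivity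
      have hu1 : u - 1 ≤ i + ‖s‖ ^ 2 := by
        rw [sub_le_iff_le_add, hu, div_le_iff₀ hρ0]; linarith
      have hB : u ^ β ≤ 1 + β * (u - 1) := by
        have := rpow_one_add_le_one_add_mul_self (s := u - 1) (by linarith) hβ.le hβ1
        simpa using this
      have hB2 : u ^ β - 1 ≤ β * (i + ‖s‖ ^ 2) := by
        have := mul_le_mul_of_nonneg_left hu1 hβ.le
        linarith
      have hq : ‖s‖ ^ 2 * k s ≤ ‖s‖ ^ (2 - p) := by
        rcases (norm_nonneg s).eq_or_lt with h | h
        · rw [← h]; simp; positivity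
        · rw [sub_eq_add_neg, Real.rpow_add h, Real.rpow_two]
          gcongr
          exact Kker_le ha s h
      have hββ : β ≤ β / σ := le_div_self hβ.le hσ0 hσ1.le
      have h2p : 0 ≤ (2:ℝ) ^ p := by positivity
      have hsp : 0 ≤ ‖s‖ ^ (2 - p) := by positivity
      calc (ρ ^ β * u ^ β - ρ ^ β) * k s = ρ ^ β * ((u ^ β - 1) * k s) := by ring
        _ ≤ ρ ^ β * (β * (i + ‖s‖ ^ 2) * k s) := by
          gcongr; exact hk0 s
        _ = ρ ^ β * (β * (‖s‖ ^ 2 * k s) + β * (i * k s) - 0) := by ring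
        _ ≤ _ := by
          have hq0 : 0 ≤ ‖s‖ ^ 2 * k s := mul_nonneg (by positivity) (hk0 s)
          have hfin : β * (‖s‖ ^ 2 * k s) ≤ β / σ * (‖s‖ ^ (2 - p) + 2 ^ p) :=
            mul_le_mul hββ (by linarith) hq0 hβσ0.le
          apply mul_le_mul_of_nonneg_left _ hρβ.le
          linarith
    · have hL : Lf N σ (ε/ρ) (d⁻¹ • (x - y)) s = 0 := by simp only [Lf, if_neg hh]
      rw [hL]
      by_cases hs : x + ρ • s ∈ closure Ω
      · rw [if_pos hs]
        calc _ ≤ ρ ^ β * (β / σ * ‖s‖ ^ σ) * k s :=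
              mul_le_mul_of_nonneg_right (hgen s hs) (hk0 s)
          _ = ρ ^ β * (β / σ * (‖s‖ ^ σ * k s)) := by ring
          _ ≤ ρ ^ β * (β / σ * Wf p σ ‖s‖) := by gcongr; exact hfar s (not_lt.1 hh)
          _ = _ := by ring
      · rw [if_neg hs, hout s hs]
        have := mul_nonneg hβσ0.le (hW s)
        nlinarith

lemma psi_meas {N : ℕ} {Ω : Set (EE N)} {ε β : ℝ} : Measurable (psi N Ω ε β) := by
  unfold psi
  have h : Measurable (sdist N Ω) := by
    unfold sdist
    exact Measurable.ite isClosed_closure.measurableSet (continuous_infDist_pt _).measurable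
      (continuous_infDist_pt _).measurable.neg
  exact Measurable.ite isClosed_closure.measurableSet ((h.const_add ε).pow_const β) measurable_const

lemma psi_bdd {N : ℕ} {Ω : Set (EE N)} (hΩb : Bornology.IsBounded Ω) {ε β : ℝ} (hε : 0 < ε)
    (hβ : 0 < β) : ∃ C, ∀ x, |psi N Ω ε β x| ≤ C := by
  have hc : IsCompact (closure Ω) := hΩb.isCompact_closure
  obtain ⟨M, hM⟩ := hc.exists_bound_of_continuousOn
    (continuous_infDist_pt (frontier Ω)).continuousOn
  refine ⟨(ε + |M|) ^ β, fun x => ?_⟩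
  unfold psi
  split_ifs with h
  · rw [sdist_closure h]
    have h0 : 0 ≤ infDist x (frontier Ω) := infDist_nonneg
    rw [abs_of_nonneg (by positivity)]
    have := hM x h
    rw [Real.norm_eq_abs, abs_of_nonneg h0] at this
    exact Real.rpow_le_rpow (by positivity) (by linarith [le_abs_self M]) hβ.le
  · simp; positivity

lemma core {N : ℕ} (hN : 1 ≤ N) {σ : ℝ} (hσ : σ ∈ Set.Ioo (0 : ℝ) 1)
    {Ω : Set (EE N)} (hΩb : Bornology.IsBounded Ω) (hne : (frontier Ω).Nonempty)
    {x : EE N} (hx : x ∈ closure Ω)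
    {ε β ρ : ℝ} (hε : 0 < ε) (hβ : 0 < β) (hβσ : β ≤ σ) (hρ : ρ = ε + sdist N Ω x)
    {w : EE N} (hw : dist w x ≤ 2 * ρ) (hwv : ∀ v, dist w v < ρ/2 → v ∉ closure Ω) :
    ρ ^ (β - 2 * σ) * (volume.real (ball (0 : EE N) (1/2)) * (1 / (1 + 3 ^ ((N:ℝ) + 2 * σ)))
      - β / σ * ∫ s : EE N, Wf ((N:ℝ) + 2 * σ) σ ‖s‖) ≤ -Iop N σ ε (psi N Ω ε β) x := by
  have hd0 : 0 ≤ sdist N Ω x := by rw [sdist_closure hx]; exact infDist_nonneg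
  have hρ0 : 0 < ρ := by linarith
  have ha : 0 < ε / ρ := by positivity
  have ha1 : ε / ρ ≤ 1 := by rw [div_le_one hρ0]; linarith
  obtain ⟨e, he⟩ := pointwise hσ hne hx hε hβ hβσ hρ
  set κ := 1 / (1 + (3:ℝ) ^ ((N:ℝ) + 2 * σ)) with hκ
  have hκ0 : 0 < κ := by positivity
  set s₀ := ρ⁻¹ • (w - x) with hs₀
  have hs₀n : ‖s₀‖ ≤ 2 := by
    rw [hs₀, norm_smul, norm_inv, Real.norm_eq_abs, abs_of_pos hρ0, inv_mul_le_iff₀ hρ0,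
      ← dist_eq_norm]; linarith
  have hws : w = x + ρ • s₀ := by rw [hs₀, smul_inv_smul₀ hρ0.ne']; abel
  set F : EE N → ℝ := fun s => (psi N Ω ε β (x + ρ • s) - psi N Ω ε β x) * Kker N σ (ε/ρ) s with hF
  set G : EE N → ℝ := fun s => ρ ^ β * (β / σ * Wf ((N:ℝ) + 2 * σ) σ ‖s‖ + β * Lf N σ (ε/ρ) e s
        - (ball s₀ (1/2)).indicator (fun _ => κ) s) with hG
  have hFG : ∀ s, F s ≤ G s := by
    intro s
    refine (he s).trans ?_
    simp only [hG]
    gcongr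
    by_cases hs : s ∈ ball s₀ (1/2)
    · rw [indicator_of_mem hs]
      rw [mem_ball] at hs
      have hout : x + ρ • s ∉ closure Ω := by
        apply hwv
        rw [hws, dist_add_left, dist_smul₀, Real.norm_eq_abs, abs_of_pos hρ0, dist_comm]
        nlinarith
      rw [if_neg hout]
      refine Kker_ge hσ.1 ha ha1 s ?_
      rw [dist_eq_norm] at hs
      have := norm_add_le (s - s₀) s₀
      rw [sub_add_cancel] at this
      linarith
    · rw [indicator_of_notMem hs]
      split_ifs
      · exact le_rfl
      · exact Kker_nonneg ha s
  have hKi := Kker_integrable (N := N) hσ.1 ha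
  have hFi : Integrable F := by
    obtain ⟨C, hC⟩ := psi_bdd hΩb hε hβ (Ω := Ω)
    refine hKi.bdd_mul (c := C + C) ?_ (ae_of_all _ fun s => ?_)
    · exact ((psi_meas.comp (by fun_prop)).sub_const _).aestronglyMeasurable
    · exact (norm_sub_le _ _).trans (add_le_add (hC _) (hC _))
  have hWi := Wf_integrable hN hσ
  have hLi := Lf_integrable (N := N) hσ.1 ha e
  have hIi : Integrable ((ball s₀ (1/2)).indicator (fun _ : EE N => κ)) :=
    (integrable_indicator_iff measurableSet_ball).2
      (integrableOn_const measure_ball_lt_top.ne)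
  have hWL : Integrable (fun s => β / σ * Wf ((N:ℝ) + 2 * σ) σ ‖s‖ + β * Lf N σ (ε/ρ) e s) :=
    (hWi.const_mul _).add (hLi.const_mul _)
  have hGi : Integrable G := (((hWi.const_mul _).add (hLi.const_mul _)).sub hIi).const_mul _
  have hint := integral_mono hFi hGi hFG
  have hGv : ∫ s, G s = ρ ^ β * (β / σ * (∫ s : EE N, Wf ((N:ℝ) + 2 * σ) σ ‖s‖)
      - volume.real (ball (0 : EE N) (1/2)) * κ) := by
    simp only [hG]
    rw [integral_const_mul, integral_sub hWL hIi,
      integral_add (hWi.const_mul _) (hLi.const_mul _), integral_const_mul, integral_const_mul,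
      Lf_integral, integral_indicator measurableSet_ball, setIntegral_const, smul_eq_mul]
    simp only [Measure.real, Measure.addHaar_ball_center]
    ring
  have hI : Iop N σ ε (psi N Ω ε β) x = ρ ^ (-(2 * σ)) * ∫ s, F s := by
    have hsc := Measure.integral_comp_smul_of_nonneg (volume : Measure (EE N))
      (fun z => (psi N Ω ε β (x + z) - psi N Ω ε β x) * Kker N σ ε z) ρ (hR := hρ0.le)
    have hFs : ∀ s, (psi N Ω ε β (x + ρ • s) - psi N Ω ε β x) * Kker N σ ε (ρ • s) =
        ρ ^ (-((N:ℝ) + 2 * σ)) * F s := by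
      intro s; rw [Kker_scale hε hρ0]; simp only [hF]; ring
    simp only [hFs, integral_const_mul] at hsc
    have hdim : Module.finrank ℝ (EE N) = N := by simp
    rw [hdim, smul_eq_mul] at hsc
    have h1 : Iop N σ ε (psi N Ω ε β) x = ρ ^ N * ((ρ ^ N)⁻¹ * Iop N σ ε (psi N Ω ε β) x) := by
      field_simp
    rw [h1]
    unfold Iop
    rw [← hsc, ← mul_assoc]
    congr 1
    rw [← Real.rpow_natCast, ← Real.rpow_add hρ0]; congr 1; ring
  rw [hI]
  have hsplit : ρ ^ (β - 2 * σ) = ρ ^ (-(2 * σ)) * ρ ^ β := by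
    rw [← Real.rpow_add hρ0]; congr 1; ring
  have hp : 0 < ρ ^ (-(2 * σ)) := by positivity
  rw [hsplit]
  rw [hGv] at hint
  have := mul_le_mul_of_nonneg_left hint hp.le
  linarith

/-- key lemma: the barrier `ψ_β(x) = (ε + d(x))^β 1_{Ω̄}(x)` satisfies
`-I_ε[ψ_β](x) ≥ c* (ε + d(x))^{β-2σ}` near the boundary. -/
theorem statement2 (N : ℕ) (hN : 1 ≤ N) (σ : ℝ) (hσ : σ ∈ Set.Ioo (0 : ℝ) 1)
    (Ω : Set (EuclideanSpace ℝ (Fin N))) (hΩo : IsOpen Ω) (hΩb : Bornology.IsBounded Ω)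
    (δ₀ : ℝ) (hC2 : HasC2Boundary N Ω δ₀) :
    ∃ δbar ∈ Set.Ioo (0 : ℝ) δ₀, ∃ β₀ ∈ Set.Ioo (0 : ℝ) (min 1 (2 * σ)), ∃ cstar > (0 : ℝ),
      ∀ β ∈ Set.Ioc (0 : ℝ) β₀, ∀ ε ∈ Set.Ioo (0 : ℝ) δbar,
        ∀ x ∈ closure {x | x ∈ Ω ∧ sdist N Ω x < δbar},
          cstar * (ε + sdist N Ω x) ^ (β - 2 * σ) ≤
            -Iop N σ ε
              (fun x' => if x' ∈ closure Ω then (ε + sdist N Ω x') ^ β else 0) x := by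
  obtain ⟨r, hr, hext⟩ := ext_ball hΩo hΩb hC2
  have hδ := hC2.2.1
  set c₁ := volume.real (ball (0 : EE N) (1/2)) * (1 / (1 + (3:ℝ) ^ ((N:ℝ) + 2 * σ))) with hc₁
  have hc₁0 : 0 < c₁ := by
    have : 0 < volume.real (ball (0 : EE N) (1/2)) :=
      ENNReal.toReal_pos (measure_ball_pos _ _ (by norm_num)).ne' measure_ball_lt_top.ne
    positivity
  set CW := ∫ s : EE N, Wf ((N:ℝ) + 2 * σ) σ ‖s‖ with hCW
  have hCW0 : 0 ≤ CW := integral_nonneg fun s => Wf_nonneg _ _ _ (norm_nonneg s)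
  obtain ⟨hσ0, hσ1⟩ := id hσ
  refine ⟨min (δ₀/2) (r/2), ⟨lt_min (by positivity) (by positivity), ?_⟩,
    min σ (σ * c₁ / (2 * (CW + 1))), ⟨lt_min hσ0 (by positivity), ?_⟩, c₁/2, by positivity, ?_⟩
  · exact lt_of_le_of_lt (min_le_left _ _) (by linarith)
  · exact lt_of_le_of_lt (min_le_left _ _) (lt_min hσ1 (by linarith))
  intro β hβ ε hε x hx
  have hβσ : β ≤ σ := hβ.2.trans (min_le_left _ _)
  have hβ2 : β ≤ σ * c₁ / (2 * (CW + 1)) := hβ.2.trans (min_le_right _ _)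
  have hεr : ε < r/2 := lt_of_lt_of_le hε.2 (min_le_right _ _)
  have hxc : x ∈ closure Ω := closure_mono (fun y hy => hy.1) hx
  have hdx : sdist N Ω x ≤ r/2 := by
    rw [sdist_closure hxc]
    have hcl : IsClosed {y : EE N | infDist y (frontier Ω) ≤ r/2} :=
      isClosed_le (continuous_infDist_pt _) continuous_const
    refine closure_minimal (fun y hy => ?_) hcl hx
    have h := hy.2
    rw [sdist_closure (subset_closure hy.1)] at h
    exact h.le.trans (min_le_right _ _)
  have hd0 : 0 ≤ sdist N Ω x := by rw [sdist_closure hxc]; exact infDist_nonneg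
  have hρ0 : 0 < ε + sdist N Ω x := by linarith [hε.1]
  obtain ⟨w, hw, hwv⟩ := hext x hxc (ε + sdist N Ω x) hρ0 (by linarith) (by linarith [hε.1])
  have h := core hN hσ hΩb hC2.1 hxc hε.1 hβ.1 hβσ rfl hw hwv
  refine le_trans ?_ h
  rw [mul_comm]
  gcongr
  rw [← hc₁, ← hCW]
  have h1 : β / σ * CW ≤ c₁ / 2 := by
    rw [le_div_iff₀ (by positivity)] at hβ2
    rw [div_mul_eq_mul_div, div_le_iff₀ hσ0]
    nlinarith [hβ.1]
  linarith
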